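/- arXiv:2502.17285 — 2 statements merged into one kernel-verified Lean document; each statement's English description precedes it below -/
import Mathlib

section
/- Let (G,c,o) be an infinite recurrent rooted network. Then there exists a potential h on (G,c,o) which tends to infinity, i.e., for every M>0 the set {v ∈ V : h(v) ≤ M} is finite. -/
open scoped ENNReal
open Filter Topology Classical
noncomputable section

/-- A rooted network: a connected, locally finite simple graph with positive
symmetric edge conductances (extended by `0` to non-edges) and a root `o`. -/
structure RootedNetwork (V : Type*) where
  G : SimpleGraph V
  locallyFinite : ∀ x : V, (G.neighborSet x).Finite
  connected : G.Connected
  c : V → V → ℝ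
  c_symm : ∀ x y, c x y = c y x
  c_pos : ∀ x y, G.Adj x y → 0 < c x y
  c_eq_zero : ∀ x y, ¬ G.Adj x y → c x y = 0
  o : V

namespace RootedNetwork

variable {V : Type*}

/-- The vertex weight `c_x = Σ_{z ∼ x} c_{xz}`. -/
noncomputable def cv (N : RootedNetwork V) (x : V) : ℝ := ∑' y, N.c x y

/-- The transition probability `p(x,y) = c_{xy} / c_x` of the network random walk. -/
noncomputable def p (N : RootedNetwork V) (x y : V) : ℝ≥0∞ :=
  ENNReal.ofReal (N.c x y / N.cv x)

/-- The probability that the network random walk started at `x` begins with the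
given finite sequence of steps. -/
noncomputable def pathProb (N : RootedNetwork V) : V → List V → ℝ≥0∞
  | _, [] => 1
  | x, y :: l => N.p x y * pathProb N y l

/-- The probability, starting from `x`, that the walk ever visits `b`
(`P_x(τ_b < ∞)`), computed by decomposing over the finite path up to the first
visit of `b`. -/
noncomputable def hitProb (N : RootedNetwork V) (x b : V) : ℝ≥0∞ :=
  if x = b then 1
  else ∑' l : {l : List V // l.getLast? = some b ∧ b ∉ l.dropLast}, N.pathProb x l.1

/-- A rooted network is recurrent if the walk started from any vertex almost
surely visits the root `o`. -/
def Recurrent (N : RootedNetwork V) : Prop := ∀ x : V, N.hitProb x N.o = 1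

/-- The Green kernel `G_o(x,y) = Σ_{n ≥ 0} P_x(X_n = y, τ_o > n)` of the walk
killed at the root, computed as a sum over finite paths from `x` to `y`
avoiding `o` (the `n = 0` term is the first summand). -/
noncomputable def GreenKer (N : RootedNetwork V) (x y : V) : ℝ≥0∞ :=
  (if x = y ∧ x ≠ N.o then 1 else 0) +
    ∑' l : {l : List V // l.getLast? = some y ∧ N.o ∉ x :: l}, N.pathProb x l.1

/-- The Green density `g_o(x,y) = G_o(x,y) / c_y`. -/
noncomputable def greenDensity (N : RootedNetwork V) (x y : V) : ℝ≥0∞ :=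
  N.GreenKer x y / ENNReal.ofReal (N.cv y)

/-- The network Laplacian `Δ f (v) = Σ_{x ∼ v} c_{vx} (f(x) - f(v))`. -/
noncomputable def lap (N : RootedNetwork V) (f : V → ℝ) (v : V) : ℝ :=
  ∑' x, N.c v x * (f x - f v)

/-- A potential: a nonnegative function vanishing at `o`, with Laplacian `1`
at `o`, harmonic everywhere else. -/
def IsPotential (N : RootedNetwork V) (h : V → ℝ) : Prop :=
  (∀ v, 0 ≤ h v) ∧ h N.o = 0 ∧ N.lap h N.o = 1 ∧ ∀ v, v ≠ N.o → N.lap h v = 0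

end RootedNetwork
namespace RootedNetwork
section helpers
variable {V : Type*} (N : RootedNetwork V)

def nb (x : V) : Finset V := (N.locallyFinite x).toFinset

lemma mem_nb {x y : V} : y ∈ N.nb x ↔ N.G.Adj x y := by
  simp [nb]

lemma c_zero_of_notMem {x y : V} (h : y ∉ N.nb x) : N.c x y = 0 :=
  N.c_eq_zero x y (fun h' => h (N.mem_nb.2 h'))

lemma c_nonneg (x y : V) : 0 ≤ N.c x y := by
  by_cases h : N.G.Adj x y
  · exact (N.c_pos x y h).le
  · exact (N.c_eq_zero x y h).ge

lemma lap_eq (f : V → ℝ) (x : V) : N.lap f x = ∑ z ∈ N.nb x, N.c x z * (f z - f x) := by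
  unfold lap
  apply tsum_eq_sum
  intro z hz
  rw [N.c_zero_of_notMem hz, zero_mul]

lemma cv_eq (x : V) : N.cv x = ∑ z ∈ N.nb x, N.c x z := by
  unfold cv
  apply tsum_eq_sum
  intro z hz
  rw [N.c_zero_of_notMem hz]

lemma cv_nonneg (x : V) : 0 ≤ N.cv x := by
  rw [cv_eq]; exact Finset.sum_nonneg fun z _ => N.c_nonneg x z

lemma lap_eq' (f : V → ℝ) (x : V) :
    N.lap f x = ∑ z ∈ N.nb x, N.c x z * f z - N.cv x * f x := by
  rw [lap_eq, cv_eq, Finset.sum_mul, ← Finset.sum_sub_distrib]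
  exact Finset.sum_congr rfl fun z _ => by ring

/-- pointwise comparison of Laplacians -/
lemma lap_mono {f g : V → ℝ} {x : V} (h : ∀ z, f z ≤ g z) (hx : f x = g x) :
    N.lap f x ≤ N.lap g x := by
  rw [lap_eq, lap_eq]
  apply Finset.sum_le_sum
  intro z _
  apply mul_le_mul_of_nonneg_left _ (N.c_nonneg x z)
  rw [hx]; linarith [h z]

lemma lap_congr {f g : V → ℝ} {x : V} (h : ∀ z ∈ N.nb x, f z = g z) (hx : f x = g x) :
    N.lap f x = N.lap g x := by
  rw [lap_eq, lap_eq]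
  exact Finset.sum_congr rfl fun z hz => by rw [h z hz, hx]

lemma lap_sum {ι : Type*} (s : Finset ι) (f : ι → V → ℝ) (a : ι → ℝ) (x : V) :
    N.lap (fun z => ∑ i ∈ s, f i z * a i) x = ∑ i ∈ s, N.lap (f i) x * a i := by
  simp only [lap_eq]
  simp_rw [← Finset.sum_sub_distrib, Finset.mul_sum, Finset.sum_mul]
  rw [Finset.sum_comm]
  exact Finset.sum_congr rfl fun i _ => Finset.sum_congr rfl fun z _ => by ring

lemma lap_sub (f g : V → ℝ) (x : V) :
    N.lap (fun z => f z - g z) x = N.lap f x - N.lap g x := by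
  simp only [lap_eq]
  rw [← Finset.sum_sub_distrib]
  exact Finset.sum_congr rfl fun z _ => by ring

lemma lap_sub_const (f : V → ℝ) (a : ℝ) (x : V) :
    N.lap (fun z => f z - a) x = N.lap f x := by
  simp only [lap_eq]
  exact Finset.sum_congr rfl fun z _ => by ring

lemma lap_tendsto {ι : Type*} {l : Filter ι} {f : ι → V → ℝ} {g : V → ℝ}
    (h : ∀ x, Tendsto (fun i => f i x) l (𝓝 (g x))) (x : V) :
    Tendsto (fun i => N.lap (f i) x) l (𝓝 (N.lap g x)) := by
  simp only [lap_eq]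
  exact tendsto_finsetSum _ fun z _ => ((h z).sub (h x)).const_mul _

lemma ultra_lim {ι : Type*} (U : Ultrafilter ι) (f : ι → ℝ) (a b : ℝ)
    (h : ∀ᶠ i in (U : Filter ι), a ≤ f i ∧ f i ≤ b) :
    ∃ L, Tendsto f U (𝓝 L) := by
  have := (isCompact_Icc (a := a) (b := b)).ultrafilter_le_nhds (U.map f)
    (by rw [Filter.le_principal_iff]; exact h)
  obtain ⟨L, _, hL⟩ := this
  exact ⟨L, hL⟩

/-! recurrence -/

def good (b : V) (n : ℕ) (l : List V) : Prop :=
  (l.getLast? = some b ∧ b ∉ l.dropLast) ∧ l.length ≤ n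

def listEquiv : Option (V × List V) ≃ List V where
  toFun o := match o with
    | none => []
    | some (y, l) => y :: l
  invFun l := match l with
    | [] => none
    | y :: l => some (y, l)
  left_inv o := by rcases o with _ | ⟨y, l⟩ <;> rfl
  right_inv l := by cases l <;> rfl

lemma tsum_list (φ : List V → ℝ≥0∞) :
    ∑' l, φ l = φ [] + ∑' y, ∑' l, φ (y :: l) := by
  rw [← (listEquiv (V := V)).tsum_eq φ, ← (Equiv.optionEquivSumPUnit.{0} (V × List V)).symm.tsum_eq,
    ENNReal.summable.tsum_sum ENNReal.summable, ENNReal.tsum_prod', add_comm]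
  simp [listEquiv]

lemma sum_good_le (u : V → ℝ) (hu : ∀ x, 0 ≤ u x) (hs : ∀ x, x ≠ N.o → N.lap u x ≤ 0)
    (ho : 1 ≤ u N.o) (n : ℕ) : ∀ x, x ≠ N.o →
    ∑' l : List V, (if good N.o n l then N.pathProb x l else 0) ≤ ENNReal.ofReal (u x) := by
  induction n with
  | zero =>
    intro x hx
    have : ∀ l : List V, (if good N.o 0 l then N.pathProb x l else 0) = 0 := by
      intro l
      rw [if_neg]
      rintro ⟨⟨h1, _⟩, h2⟩
      have : l = [] := List.length_eq_zero_iff.1 (by omega)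
      subst this
      simp at h1
    simp [this]
  | succ n ih =>
    intro x hx
    rw [tsum_list]
    have h0 : (if good N.o (n+1) ([] : List V) then N.pathProb x [] else 0) = 0 := by
      rw [if_neg]
      rintro ⟨⟨h1, _⟩, h2⟩
      simp at h1
    rw [h0, zero_add]
    have h1 : ∀ y, ∑' l : List V, (if good N.o (n+1) (y :: l) then N.pathProb x (y :: l) else 0)
        ≤ N.p x y * ENNReal.ofReal (u y) := by
      intro y
      by_cases hy : y = N.o
      · subst hy
        rw [tsum_eq_single []]
        · split_ifs
          · simp only [pathProb, mul_one]
            calc N.p x N.o = N.p x N.o * 1 := (mul_one _).symm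
              _ ≤ _ := by
                gcongr
                rw [← ENNReal.ofReal_one]
                exact ENNReal.ofReal_le_ofReal ho
          · exact zero_le
        · intro l hl
          rw [if_neg]
          rintro ⟨⟨_, h2⟩, _⟩
          rw [List.dropLast_cons_of_ne_nil hl] at h2
          simp at h2
      · calc ∑' l : List V, (if good N.o (n+1) (y :: l) then N.pathProb x (y :: l) else 0)
            ≤ ∑' l : List V, N.p x y * (if good N.o n l then N.pathProb y l else 0) := by
              apply ENNReal.tsum_le_tsum
              intro l
              by_cases hg : good N.o (n+1) (y :: l)
              · have hl : l ≠ [] := by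
                  rintro rfl
                  have := hg.1.1
                  simp at this
                  exact hy this
                have : good N.o n l := by
                  obtain ⟨⟨a, b⟩, c⟩ := hg
                  rw [List.dropLast_cons_of_ne_nil hl] at b
                  refine ⟨⟨?_, fun h => b (List.mem_cons_of_mem _ h)⟩, by simpa using c⟩
                  cases l with
                  | nil => exact absurd rfl hl
                  | cons z l => rw [List.getLast?_cons_cons] at a; exact a
                rw [if_pos hg, if_pos this]; rfl
              · rw [if_neg hg]; exact zero_le
          _ = N.p x y * ∑' l : List V, (if good N.o n l then N.pathProb y l else 0) :=
              ENNReal.tsum_mul_left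
          _ ≤ _ := by gcongr; exact ih y hy
    refine (ENNReal.tsum_le_tsum h1).trans ?_
    rw [tsum_eq_sum (s := N.nb x)]
    · have : ∀ y, N.p x y * ENNReal.ofReal (u y) = ENNReal.ofReal (N.c x y / N.cv x * u y) := by
        intro y
        rw [p, ENNReal.ofReal_mul (div_nonneg (N.c_nonneg x y) (N.cv_nonneg x))]
      simp only [this]
      rw [← ENNReal.ofReal_sum_of_nonneg]
      · apply ENNReal.ofReal_le_ofReal
        have h3 := hs x hx
        rw [lap_eq'] at h3
        rcases (N.cv_nonneg x).eq_or_lt with h4 | h4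
        · simp [← h4, hu x]
        · have : ∑ i ∈ N.nb x, N.c x i / N.cv x * u i = (∑ i ∈ N.nb x, N.c x i * u i) / N.cv x := by
            rw [Finset.sum_div]; exact Finset.sum_congr rfl fun z _ => by ring
          rw [this, div_le_iff₀ h4]
          linarith
      · intro y _
        exact mul_nonneg (div_nonneg (N.c_nonneg x y) (N.cv_nonneg x)) (hu y)
    · intro y hy
      rw [p, N.c_zero_of_notMem hy]; simp

lemma rec_ge (hrec : N.Recurrent) (u : V → ℝ) (hu : ∀ x, 0 ≤ u x)
    (hs : ∀ x, x ≠ N.o → N.lap u x ≤ 0) (ho : 1 ≤ u N.o) (x : V) : 1 ≤ u x := by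
  by_cases hx : x = N.o
  · rw [hx]; exact ho
  have h := hrec x
  rw [hitProb, if_neg hx] at h
  have : (1 : ℝ≥0∞) ≤ ENNReal.ofReal (u x) := by
    rw [← h, ENNReal.tsum_eq_iSup_sum]
    apply iSup_le
    intro s
    let n := s.sup (fun l => l.1.length)
    refine le_trans ?_ (N.sum_good_le u hu hs ho n x hx)
    calc ∑ l ∈ s, N.pathProb x l.1
        = ∑ l ∈ s, (if good N.o n l.1 then N.pathProb x l.1 else 0) := by
          apply Finset.sum_congr rfl
          intro l hl
          rw [if_pos]
          exact ⟨l.2, Finset.le_sup (f := fun l : {l : List V // l.getLast? = some N.o ∧ N.o ∉ l.dropLast} => l.1.length) hl⟩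
      _ ≤ ∑' l : {l : List V // l.getLast? = some N.o ∧ N.o ∉ l.dropLast},
            (if good N.o n l.1 then N.pathProb x l.1 else 0) := ENNReal.sum_le_tsum s
      _ ≤ _ := ENNReal.tsum_comp_le_tsum_of_injective Subtype.val_injective _
  rw [← ENNReal.ofReal_one] at this
  exact (ENNReal.ofReal_le_ofReal_iff (hu x)).1 this

/-- maximum principle -/
lemma max_principle (hrec : N.Recurrent) (f : V → ℝ) (K : ℝ) (hK : ∀ x, f x ≤ K)
    (ho : f N.o ≤ 0) (hs : ∀ x, x ≠ N.o → 0 < f x → 0 ≤ N.lap f x) (x : V) : f x ≤ 0 := by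
  set K' := max K 1 with hK'
  have hK0 : 0 < K' := lt_of_lt_of_le one_pos (le_max_right _ _)
  have hKf : ∀ x, f x ≤ K' := fun x => (hK x).trans (le_max_left _ _)
  have key := N.rec_ge hrec (fun x => 1 - max (f x) 0 / K') ?_ ?_ ?_ x
  · have : max (f x) 0 / K' ≤ 0 := by linarith
    rw [div_le_iff₀ hK0, zero_mul] at this
    exact (le_max_left _ _).trans this
  · intro x
    have : max (f x) 0 / K' ≤ 1 := by
      rw [div_le_one hK0]; exact max_le (hKf x) hK0.le
    simpa using this
  · intro x hx
    have h1 : 0 ≤ N.lap (fun z => max (f z) 0) x := by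
      by_cases h : 0 < f x
      · refine (hs x hx h).trans (N.lap_mono (fun z => le_max_left _ _) ?_)
        rw [max_eq_left h.le]
      · push Not at h
        have h0 : N.lap (fun _ => (0:ℝ)) x = 0 := by simp [lap_eq]
        refine h0.ge.trans (N.lap_mono (fun z => le_max_right _ _) ?_)
        rw [max_eq_right h]
    have h2 : N.lap (fun x => 1 - max (f x) 0 / K') x = - (N.lap (fun z => max (f z) 0) x / K') := by
      simp only [lap_eq]
      rw [Finset.sum_div, ← Finset.sum_neg_distrib]
      exact Finset.sum_congr rfl fun z _ => by ring
    rw [h2]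
    have := div_nonneg h1 hK0.le
    linarith
  · simp [max_eq_right ho]

/-- uniqueness -/
lemma uniq (hrec : N.Recurrent) (f g : V → ℝ) (K : ℝ) (hf : ∀ x, |f x| ≤ K) (hg : ∀ x, |g x| ≤ K)
    (ho : f N.o = g N.o) (hs : ∀ x, x ≠ N.o → N.lap f x = N.lap g x) (x : V) : f x = g x := by
  have h1 := N.max_principle hrec (fun z => f z - g z) (2*K)
    (fun x => by linarith [(abs_le.1 (hf x)).2, (abs_le.1 (hg x)).1]) (by simp [ho])
    (fun x hx _ => by rw [lap_sub, hs x hx, sub_self]) x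
  have h2 := N.max_principle hrec (fun z => g z - f z) (2*K)
    (fun x => by linarith [(abs_le.1 (hf x)).1, (abs_le.1 (hg x)).2]) (by simp [ho])
    (fun x hx _ => by rw [lap_sub, hs x hx, sub_self]) x
  linarith

/-- Sub-potentials. -/
def SubPot (h : V → ℝ) : Prop :=
  (∀ v, 0 ≤ h v) ∧ h N.o = 0 ∧ N.lap h N.o ≤ 1 ∧ ∀ v, v ≠ N.o → N.lap h v ≤ 0

lemma exists_bound' (x : V) : ∃ C : ℝ, ∃ P : Finset V, ∀ h : V → ℝ, (∀ v, 0 ≤ h v) → h N.o = 0 →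
    N.lap h N.o ≤ 1 → (∀ v ∈ P, v ≠ N.o → N.lap h v ≤ 0) → h x ≤ C := by
  have hr : Relation.ReflTransGen N.G.Adj N.o x :=
    (SimpleGraph.reachable_iff_reflTransGen _ _).1 (N.connected N.o x)
  induction hr with
  | refl => exact ⟨0, ∅, fun h _ hh _ _ => hh.le⟩
  | @tail y z _ hyz ih =>
    obtain ⟨C, P, hC⟩ := ih
    have hc := N.c_pos y z hyz
    have key : ∀ h : V → ℝ, (∀ v, 0 ≤ h v) → N.c y z * h z ≤ ∑ w ∈ N.nb y, N.c y w * h w := by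
      intro h hh
      exact Finset.single_le_sum (f := fun w => N.c y w * h w)
        (fun w _ => mul_nonneg (N.c_nonneg y w) (hh w)) (N.mem_nb.2 hyz)
    by_cases hy : y = N.o
    · refine ⟨1 / N.c y z, ∅, fun h h1 h2 h3 h4 => ?_⟩
      rw [lap_eq', h2, ← hy] at h3
      rw [le_div_iff₀ hc]
      linarith [key h h1]
    · refine ⟨N.cv y * C / N.c y z, insert y P, fun h h1 h2 h3 h4 => ?_⟩
      have h5 := h4 y (Finset.mem_insert_self _ _) hy
      rw [lap_eq'] at h5
      rw [le_div_iff₀ hc]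
      have := mul_le_mul_of_nonneg_left
        (hC h h1 h2 h3 (fun v hv => h4 v (Finset.mem_insert_of_mem hv))) (N.cv_nonneg y)
      linarith [key h h1]

lemma exists_bound (x : V) : ∃ C : ℝ, ∀ h, N.SubPot h → h x ≤ C := by
  obtain ⟨C, P, h⟩ := N.exists_bound' x
  exact ⟨C, fun f hf => h f hf.1 hf.2.1 hf.2.2.1 fun v _ => hf.2.2.2 v⟩

end helpers
end RootedNetwork
namespace RootedNetwork
section green
variable {V : Type*} (N : RootedNetwork V)

lemma sum_nb_eq (F : Finset V) (f : V → ℝ) (hf : ∀ x, x ∉ F → f x = 0) (x : V) :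
    ∑ z ∈ N.nb x, N.c x z * f z = ∑ z ∈ F, N.c x z * f z := by
  have h1 : ∑ z ∈ N.nb x, N.c x z * f z = ∑ z ∈ N.nb x ∪ F, N.c x z * f z := by
    apply Finset.sum_subset Finset.subset_union_left
    intro z _ hz
    rw [N.c_zero_of_notMem hz, zero_mul]
  have h2 : ∑ z ∈ F, N.c x z * f z = ∑ z ∈ N.nb x ∪ F, N.c x z * f z := by
    apply Finset.sum_subset Finset.subset_union_right
    intro z _ hz
    rw [hf z hz, mul_zero]
  rw [h1, h2]

lemma bdd_of_fin (F : Finset V) (f : V → ℝ) (hf : ∀ x, x ∉ F → f x = 0) :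
    ∃ K, ∀ x, |f x| ≤ K := by
  refine ⟨∑ z ∈ F, |f z|, fun x => ?_⟩
  by_cases hx : x ∈ F
  · exact Finset.single_le_sum (f := fun z => |f z|) (fun z _ => abs_nonneg _) hx
  · rw [hf x hx, abs_zero]
    exact Finset.sum_nonneg (fun z _ => abs_nonneg _)

def extF (F : Finset V) (v : F → ℝ) (x : V) : ℝ := if h : x ∈ F then v ⟨x, h⟩ else 0

def matF (F : Finset V) : Matrix F F ℝ :=
  fun x y => (if x = y then N.cv x else 0) - N.c x y

lemma lap_extF (F : Finset V) (v : F → ℝ) (x : F) :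
    N.lap (extF F v) x = - (N.matF F).mulVec v x := by
  rw [lap_eq', N.sum_nb_eq F _ (fun x hx => by simp [extF, hx]), ← Finset.sum_coe_sort]
  simp [Matrix.mulVec, dotProduct, matF, sub_mul, Finset.sum_sub_distrib, extF]

lemma exists_greenF (hrec : N.Recurrent) (F : Finset V) (hF : N.o ∉ F) :
    ∃ g : V → V → ℝ, (∀ x y, g x y = g y x) ∧ (∀ x, x ∉ F → ∀ y, g x y = 0) ∧
      ∀ y ∈ F, ∀ x ∈ F, N.lap (fun z => g z y) x = if x = y then -1 else 0 := by
  have hinj : Function.Injective (N.matF F).mulVec := by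
    rw [← Matrix.coe_mulVecLin, injective_iff_map_eq_zero]
    intro v hv
    rw [Matrix.mulVecLin_apply] at hv
    have h0 : ∀ x, x ∉ F → extF F v x = 0 := fun x hx => by simp [extF, hx]
    obtain ⟨K, hK⟩ := bdd_of_fin F (extF F v) h0
    have hl : ∀ x ∈ F, N.lap (extF F v) x = 0 := by
      intro x hx
      have := N.lap_extF F v ⟨x, hx⟩
      rw [hv] at this
      simpa using this
    have h1 := N.max_principle hrec (extF F v) K (fun x => (abs_le.1 (hK x)).2) (h0 _ hF).le
      (fun x hx hp => by
        by_cases hxF : x ∈ F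
        · exact (hl x hxF).ge
        · rw [h0 x hxF] at hp; exact absurd hp (lt_irrefl _))
    have h2 := N.max_principle hrec (fun z => 0 - extF F v z) K
      (fun x => by linarith [(abs_le.1 (hK x)).1]) (by simp [h0 _ hF])
      (fun x hx hp => by
        by_cases hxF : x ∈ F
        · rw [N.lap_sub (fun _ => 0), hl x hxF]; simp [lap_eq]
        · rw [h0 x hxF] at hp; simp at hp)
    funext x
    have h3 := h1 x
    have h4 := h2 x
    simp only [extF, x.2, dif_pos] at h3 h4
    simp only [Pi.zero_apply]
    linarith
  have hu : IsUnit (N.matF F) := Matrix.mulVec_injective_iff_isUnit.1 hinj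
  have hsymm : (N.matF F).transpose = N.matF F := by
    ext x y
    simp only [Matrix.transpose_apply, matF]
    rw [N.c_symm y x]
    by_cases h : x = y
    · subst h; rfl
    · rw [if_neg h, if_neg (Ne.symm h)]
  have hsi : ((N.matF F)⁻¹).transpose = (N.matF F)⁻¹ := by
    rw [Matrix.transpose_nonsing_inv, hsymm]
  obtain ⟨B, hB⟩ : ∃ B : F → F → ℝ, ∀ a b, B a b = (N.matF F)⁻¹ a b := ⟨_, fun _ _ => rfl⟩
  have hBs : ∀ a b, B a b = B b a := by
    intro a b
    rw [hB, hB]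
    conv_lhs => rw [← hsi]
    rfl
  refine ⟨fun x y => if h : x ∈ F ∧ y ∈ F then B ⟨x, h.1⟩ ⟨y, h.2⟩ else 0, ?_, ?_, ?_⟩
  · intro x y
    by_cases h : x ∈ F ∧ y ∈ F
    · simp only [dif_pos h, dif_pos h.symm]
      exact hBs _ _
    · simp only [dif_neg h, dif_neg (fun h' : y ∈ F ∧ x ∈ F => h h'.symm)]
  · intro x hx y
    simp [hx]
  · intro y hy x hx
    have : (fun z => if h : z ∈ F ∧ y ∈ F then B ⟨z, h.1⟩ ⟨y, h.2⟩ else 0)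
        = extF F (fun z => B z ⟨y, hy⟩) := by
      funext z
      by_cases hz : z ∈ F
      · simp [extF, hz, hy]
      · simp [extF, hz]
    rw [this]
    have h1 := N.lap_extF F (fun z => B z ⟨y, hy⟩) ⟨x, hx⟩
    simp only at h1
    rw [h1]
    have h2 : (N.matF F).mulVec (fun z => B z ⟨y, hy⟩) ⟨x, hx⟩
        = (N.matF F * (N.matF F)⁻¹) ⟨x, hx⟩ ⟨y, hy⟩ := by
      simp [hB, Matrix.mul_apply, Matrix.mulVec, dotProduct]
    rw [h2, Matrix.mul_nonsing_inv _ ((Matrix.isUnit_iff_isUnit_det _).1 hu), Matrix.one_apply]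
    by_cases h : x = y
    · subst h; simp
    · rw [if_neg h, if_neg]
      · simp
      · intro h'; exact h (congrArg Subtype.val h')

/-- the flux function -/
lemma lap_flux (g : V → V → ℝ) (hsymm : ∀ x y, g x y = g y x) (hgo : ∀ y, g N.o y = 0)
    (x : V) (hx : x ≠ N.o)
    (hl : ∀ y, y ≠ N.o → N.c N.o y ≠ 0 → N.lap (fun z => g z y) x = if x = y then -1 else 0) :
    N.lap (fun y => N.lap (fun z => g z y) N.o + if y = N.o then 1 else 0) x = 0 := by
  have h1 : ∀ y, N.lap (fun z => g z y) N.o = ∑ w ∈ N.nb N.o, g y w * N.c N.o w := by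
    intro y
    rw [lap_eq', hgo y, mul_zero, sub_zero]
    exact Finset.sum_congr rfl fun w _ => by rw [hsymm w y]; ring
  simp only [h1]
  have h2 : N.lap (fun y => ∑ w ∈ N.nb N.o, g y w * N.c N.o w + if y = N.o then 1 else 0) x
    = N.lap (fun y => ∑ w ∈ N.nb N.o, g y w * N.c N.o w) x
      + N.lap (fun y => if y = N.o then 1 else 0) x := by
    simp only [lap_eq]
    rw [← Finset.sum_add_distrib]
    exact Finset.sum_congr rfl fun z _ => by ring
  rw [h2, N.lap_sum]
  have h3 : N.lap (fun y => if y = N.o then (1:ℝ) else 0) x = N.c x N.o := by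
    rw [lap_eq', if_neg hx]
    simp only [mul_ite, mul_one, mul_zero, Finset.sum_ite_eq', sub_zero]
    split_ifs with h
    · rfl
    · rw [N.c_zero_of_notMem h]
  have h4 : ∑ w ∈ N.nb N.o, N.lap (fun z => g z w) x * N.c N.o w
      = ∑ w ∈ N.nb N.o, if x = w then - N.c N.o w else 0 := by
    apply Finset.sum_congr rfl
    intro w hw
    have ha := N.mem_nb.1 hw
    rw [hl w ha.ne' (N.c_pos _ _ ha).ne']
    split_ifs <;> simp
  rw [h3, h4, Finset.sum_ite_eq]
  split_ifs with h
  · rw [N.c_symm x]; ring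
  · rw [N.c_symm x, N.c_zero_of_notMem h]; ring

lemma greenF_subPot (hrec : N.Recurrent) (F : Finset V) (hF : N.o ∉ F) (g : V → V → ℝ)
    (hsymm : ∀ x y, g x y = g y x) (h0 : ∀ x, x ∉ F → ∀ y, g x y = 0)
    (hl : ∀ y ∈ F, ∀ x ∈ F, N.lap (fun z => g z y) x = if x = y then -1 else 0)
    (y : V) : (∀ v, 0 ≤ g v y) ∧ g N.o y = 0 ∧ N.lap (fun z => g z y) N.o ≤ 1 ∧
      ∀ v ∈ F, N.lap (fun z => g z y) v ≤ 0 := by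
  have h0' : ∀ x, x ∉ F → ∀ y, g y x = 0 := fun x hx y => by rw [hsymm]; exact h0 x hx y
  have hz : ∀ y, y ∉ F → (fun z => g z y) = fun _ => (0:ℝ) := fun y hy => by
    funext z; exact h0' y hy z
  have hlz : ∀ x, N.lap (fun _ => (0:ℝ)) x = 0 := fun x => by simp [lap_eq]
  have hnn : ∀ y z, 0 ≤ g z y := by
    intro y z
    by_cases hy : y ∈ F
    · obtain ⟨K, hK⟩ := bdd_of_fin F (fun z => g z y) (fun x hx => h0 x hx y)
      have := N.max_principle hrec (fun z => 0 - g z y) K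
        (fun x => by linarith [(abs_le.1 (hK x)).1]) (by simp [h0 _ hF])
        (fun x hx hp => by
          by_cases hxF : x ∈ F
          · rw [N.lap_sub (fun _ => 0), hl y hy x hxF, hlz]
            split_ifs <;> norm_num
          · rw [h0 x hxF] at hp; simp at hp) z
      linarith
    · rw [h0' y hy]
  refine ⟨hnn y, h0 _ hF y, ?_, ?_⟩
  · by_cases hy : y ∈ F
    · let w : V → ℝ := fun y => N.lap (fun z => g z y) N.o + if y = N.o then 1 else 0
      have hwF : ∀ y, y ∉ F → y ≠ N.o → w y = 0 := by
        intro y hy hyo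
        simp only [w]
        rw [hz y hy, hlz, if_neg hyo, add_zero]
      have hwo : w N.o = 1 := by
        simp only [w]
        rw [hz _ hF, hlz]; simp
      obtain ⟨K, hK⟩ := bdd_of_fin (insert N.o F) w (fun x hx => by
        rw [Finset.mem_insert, not_or] at hx; exact hwF x hx.2 hx.1)
      have := N.max_principle hrec (fun z => w z - 1) K
        (fun x => by linarith [(abs_le.1 (hK x)).2]) (by simp [hwo])
        (fun x hx hp => by
          by_cases hxF : x ∈ F
          · rw [N.lap_sub_const]
            refine (N.lap_flux g hsymm (h0 _ hF) x hx ?_).ge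
            intro y hyo _
            by_cases hy : y ∈ F
            · exact hl y hy x hxF
            · rw [hz y hy, hlz, if_neg]; rintro rfl; exact hy hxF
          · rw [hwF x hxF hx] at hp; norm_num at hp) y
      have hyo : y ≠ N.o := by rintro rfl; exact hF hy
      simp only [w, if_neg hyo] at this
      linarith
    · rw [hz y hy, hlz]; exact zero_le_one
  · intro x hxF
    by_cases hy : y ∈ F
    · rw [hl y hy x hxF]; split_ifs <;> norm_num
    · rw [hz y hy, hlz]

end green
end RootedNetwork
namespace RootedNetwork
section green2
variable {V : Type*} (N : RootedNetwork V)

structure IsGreen (g : V → V → ℝ) : Prop where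
  symm : ∀ x y, g x y = g y x
  nonneg : ∀ x y, 0 ≤ g x y
  root : ∀ y, g N.o y = 0
  lap_off : ∀ y, y ≠ N.o → ∀ x, x ≠ N.o → N.lap (fun z => g z y) x = if x = y then -1 else 0
  lap_root : ∀ y, y ≠ N.o → N.lap (fun z => g z y) N.o = 1
  bdd : ∀ y, ∃ K, ∀ x, g x y ≤ K

lemma exists_green (hrec : N.Recurrent) : ∃ g, N.IsGreen g := by
  have hex : ∀ F : Finset V, ∃ g : V → V → ℝ, (∀ x y, g x y = g y x) ∧
      (∀ y, (∀ v, 0 ≤ g v y) ∧ g N.o y = 0 ∧ N.lap (fun z => g z y) N.o ≤ 1 ∧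
      ∀ v ∈ F.erase N.o, N.lap (fun z => g z y) v ≤ 0) ∧
      ∀ y ∈ F.erase N.o, ∀ x ∈ F.erase N.o, N.lap (fun z => g z y) x = if x = y then -1 else 0 := by
    intro F
    have ho : N.o ∉ F.erase N.o := Finset.notMem_erase _ _
    obtain ⟨g, h1, h2, h3⟩ := N.exists_greenF hrec (F.erase N.o) ho
    exact ⟨g, h1, N.greenF_subPot hrec _ ho g h1 h2 h3, h3⟩
  choose gF hs hp hl using hex
  let U : Ultrafilter (Finset V) := Ultrafilter.of atTop
  have hU : (U : Filter (Finset V)) ≤ atTop := Ultrafilter.of_le _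
  choose C P hC using N.exists_bound'
  have hbd : ∀ x y, ∀ᶠ F in (U : Filter (Finset V)), gF F x y ≤ C x := by
    intro x y
    have : ∀ᶠ F in (U : Filter (Finset V)), P x ⊆ F := hU (eventually_ge_atTop (P x))
    filter_upwards [this] with F hF
    obtain ⟨h1, h2, h3, h4⟩ := hp F y
    exact hC x _ h1 h2 h3 (fun v hv hvo => h4 v (Finset.mem_erase.2 ⟨hvo, hF hv⟩))
  have hlim : ∀ x y, ∃ L, Tendsto (fun F => gF F x y) U (𝓝 L) := by
    intro x y
    apply ultra_lim U _ 0 (C x)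
    filter_upwards [hbd x y] with F hF
    exact ⟨(hp F y).1 x, hF⟩
  choose g hg using hlim
  have hsymm : ∀ x y, g x y = g y x := by
    intro x y
    refine tendsto_nhds_unique (hg x y) ((hg y x).congr fun F => hs F y x)
  have hnn : ∀ x y, 0 ≤ g x y := fun x y =>
    ge_of_tendsto' (hg x y) fun F => (hp F y).1 x
  have hroot : ∀ y, g N.o y = 0 := by
    intro y
    refine tendsto_nhds_unique (hg N.o y) (tendsto_const_nhds.congr fun F => ((hp F y).2.1).symm)
  have hbdd : ∀ y, ∃ K, ∀ x, g x y ≤ K := by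
    intro y
    refine ⟨C y, fun x => ?_⟩
    rw [hsymm]
    exact le_of_tendsto (hg y x) (hbd y x)
  have hlo : ∀ y, y ≠ N.o → ∀ x, x ≠ N.o →
      N.lap (fun z => g z y) x = if x = y then -1 else 0 := by
    intro y hy x hx
    refine tendsto_nhds_unique (N.lap_tendsto (fun z => hg z y) x)
      (tendsto_const_nhds.congr' ?_)
    have : ∀ᶠ F in (U : Filter (Finset V)), {x, y} ⊆ F := hU (eventually_ge_atTop _)
    filter_upwards [this] with F hF
    rw [hl F y (Finset.mem_erase.2 ⟨hy, hF (by simp)⟩) x (Finset.mem_erase.2 ⟨hx, hF (by simp)⟩)]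
  refine ⟨g, hsymm, hnn, hroot, hlo, ?_, hbdd⟩
  let w : V → ℝ := fun y => N.lap (fun z => g z y) N.o + if y = N.o then 1 else 0
  have hwl : ∀ x, x ≠ N.o → N.lap w x = 0 := fun x hx =>
    N.lap_flux g hsymm hroot x hx (fun y hy _ => hlo y hy x hx)
  have hwo : w N.o = 1 := by
    have : (fun z => g z N.o) = fun _ => (0:ℝ) := by
      funext z; rw [hsymm, hroot]
    simp only [w, this]
    simp [lap_eq]
  have hwle : ∀ x, w x ≤ 2 := by
    intro y
    have : N.lap (fun z => g z y) N.o ≤ 1 :=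
      le_of_tendsto' (N.lap_tendsto (fun z => hg z y) N.o) fun F => (hp F y).2.2.1
    simp only [w]
    split_ifs <;> linarith
  have hwnn : ∀ x, 0 ≤ w x := by
    intro y
    have : 0 ≤ N.lap (fun z => g z y) N.o := by
      rw [lap_eq]
      exact Finset.sum_nonneg fun z _ => mul_nonneg (N.c_nonneg _ _) (by rw [hroot, sub_zero]; exact hnn _ _)
    simp only [w]
    split_ifs <;> linarith
  intro y hy
  have := N.uniq hrec w (fun _ => 1) 2 (fun x => abs_le.2 ⟨by linarith [hwnn x], hwle x⟩)
    (fun x => by norm_num) hwo (fun x hx => by rw [hwl x hx]; simp [lap_eq]) y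
  simpa [w, hy] using this

variable {N}
/-- facts about finite Green potentials -/
lemma IsGreen.lap_pot {g : V → V → ℝ} (hg : N.IsGreen g) (W : Finset V) (ν : V → ℝ)
    (hWo : ν N.o = 0) (x : V) (hx : x ≠ N.o) (hW : x ∉ W → ν x = 0) :
    N.lap (fun z => ∑ y ∈ W, g z y * ν y) x = - ν x := by
  rw [N.lap_sum W (fun y z => g z y)]
  have : ∀ y ∈ W, N.lap (fun z => g z y) x * ν y = if x = y then - ν y else 0 := by
    intro y _
    by_cases hy : y = N.o
    · subst hy; rw [hWo]; simp
    · rw [hg.lap_off y hy x hx]; split_ifs <;> simp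
  rw [Finset.sum_congr rfl this, Finset.sum_ite_eq]
  split_ifs with h
  · rfl
  · rw [hW h, neg_zero]

lemma IsGreen.lap_pot_root {g : V → V → ℝ} (hg : N.IsGreen g) (W : Finset V) (ν : V → ℝ)
    (hWo : ν N.o = 0) :
    N.lap (fun z => ∑ y ∈ W, g z y * ν y) N.o = ∑ y ∈ W, ν y := by
  rw [N.lap_sum W (fun y z => g z y)]
  apply Finset.sum_congr rfl
  intro y _
  by_cases hy : y = N.o
  · subst hy; rw [hWo]; simp
  · rw [hg.lap_root y hy, one_mul]

lemma IsGreen.bdd_pot {g : V → V → ℝ} (hg : N.IsGreen g) (W : Finset V) (ν : V → ℝ)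
    (hν : ∀ y, 0 ≤ ν y) : ∃ K, ∀ x, |∑ y ∈ W, g x y * ν y| ≤ K := by
  choose K hK using hg.bdd
  refine ⟨∑ y ∈ W, K y * ν y, fun x => ?_⟩
  rw [abs_of_nonneg (Finset.sum_nonneg fun y _ => mul_nonneg (hg.nonneg _ _) (hν y))]
  exact Finset.sum_le_sum fun y _ => mul_le_mul_of_nonneg_right (hK y x) (hν y)

lemma IsGreen.subPot {g : V → V → ℝ} (hg : N.IsGreen g) (W : Finset V) (ν : V → ℝ)
    (hν : ∀ y, 0 ≤ ν y) (hWo : ν N.o = 0) (h0 : ∀ x, x ∉ W → ν x = 0) (h1 : ∑ y ∈ W, ν y = 1) :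
    N.SubPot (fun z => ∑ y ∈ W, g z y * ν y) := by
  refine ⟨fun v => Finset.sum_nonneg fun y _ => mul_nonneg (hg.nonneg _ _) (hν y), ?_, ?_, ?_⟩
  · simp [hg.root]
  · rw [hg.lap_pot_root W ν hWo, h1]
  · intro v hv
    rw [hg.lap_pot W ν hWo v hv (h0 v)]
    linarith [hν v]

/-- limits of Green functions along infinite sets are potentials -/
lemma IsGreen.exists_limit {g : V → V → ℝ} (hg : N.IsGreen g) (S : Set V) (hS : S.Infinite) :
    ∃ h, N.IsPotential h ∧ ∃ U : Ultrafilter V, (∀ᶠ y in (U : Filter V), y ∈ S) ∧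
      ∀ x, Tendsto (fun y => g x y) U (𝓝 (h x)) := by
  have : (cofinite ⊓ 𝓟 S).NeBot := by
    rw [cofinite_inf_principal_neBot_iff]; exact hS
  let U : Ultrafilter V := Ultrafilter.of (cofinite ⊓ 𝓟 S)
  have hU : (U : Filter V) ≤ cofinite ⊓ 𝓟 S := Ultrafilter.of_le _
  have hUc : (U : Filter V) ≤ cofinite := hU.trans inf_le_left
  have hUS : ∀ᶠ y in (U : Filter V), y ∈ S := by
    have := hU.trans inf_le_right
    exact this (mem_principal_self S)
  have hne : ∀ x, ∀ᶠ y in (U : Filter V), y ≠ x := fun x =>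
    hUc (by simp [Set.compl_def])
  choose K hK using hg.bdd
  have hlim : ∀ x, ∃ L, Tendsto (fun y => g x y) U (𝓝 L) := fun x =>
    ultra_lim U _ 0 (K x) (Eventually.of_forall fun y =>
      ⟨hg.nonneg _ _, by rw [hg.symm]; exact hK x y⟩)
  choose h hh using hlim
  refine ⟨h, ⟨?_, ?_, ?_, ?_⟩, U, hUS, hh⟩
  · exact fun v => ge_of_tendsto' (hh v) fun y => hg.nonneg _ _
  · refine tendsto_nhds_unique (hh N.o) (tendsto_const_nhds.congr fun y => (hg.root y).symm)
  · refine tendsto_nhds_unique (N.lap_tendsto (f := fun y z => g z y) hh N.o)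
      (tendsto_const_nhds.congr' ?_)
    filter_upwards [hne N.o] with y hy
    exact (hg.lap_root y hy).symm
  · intro v hv
    refine tendsto_nhds_unique (N.lap_tendsto (f := fun y z => g z y) hh v)
      (tendsto_const_nhds.congr' ?_)
    filter_upwards [hne N.o, hne v] with y hy hy'
    rw [hg.lap_off y hy v hv, if_neg hy'.symm]

end green2
end RootedNetwork
namespace RootedNetwork
section main
variable {V : Type*} {N : RootedNetwork V}

lemma no_bdd (hrec : N.Recurrent) (K : ℝ) : ∃ B : Finset V, N.o ∈ B ∧ ∀ h : V → ℝ,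
    (∀ x, 0 ≤ h x) → (∀ x, h x ≤ K) → h N.o = 0 → 1 / 2 ≤ N.lap h N.o →
    (∀ x ∈ B, x ≠ N.o → N.lap h x = 0) → False := by
  by_contra hcon
  push Not at hcon
  have hex : ∀ B : Finset V, ∃ h : V → ℝ,
    (∀ x, 0 ≤ h x) ∧ (∀ x, h x ≤ K) ∧ h N.o = 0 ∧ 1 / 2 ≤ N.lap h N.o ∧
    (∀ x ∈ B, x ≠ N.o → N.lap h x = 0) := by
    intro B
    obtain ⟨h, h1, h2, h3, h4, h5, _⟩ := hcon (insert N.o B) (Finset.mem_insert_self _ _)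
    exact ⟨h, h1, h2, h3, h4, fun x hx => h5 x (Finset.mem_insert_of_mem hx)⟩
  choose h h1 h2 h3 h4 h5 using hex
  let U : Ultrafilter (Finset V) := Ultrafilter.of atTop
  have hU : (U : Filter (Finset V)) ≤ atTop := Ultrafilter.of_le _
  have hlim : ∀ x, ∃ L, Tendsto (fun F => h F x) U (𝓝 L) := fun x =>
    ultra_lim U _ 0 K (Eventually.of_forall fun F => ⟨h1 F x, h2 F x⟩)
  choose f hf using hlim
  have f1 : ∀ x, 0 ≤ f x := fun x => ge_of_tendsto' (hf x) fun F => h1 F x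
  have f2 : ∀ x, f x ≤ K := fun x => le_of_tendsto' (hf x) fun F => h2 F x
  have f3 : f N.o = 0 :=
    tendsto_nhds_unique (hf N.o) (tendsto_const_nhds.congr fun F => (h3 F).symm)
  have f4 : 1 / 2 ≤ N.lap f N.o := ge_of_tendsto' (N.lap_tendsto hf N.o) h4
  have f5 : ∀ x, x ≠ N.o → N.lap f x = 0 := by
    intro x hx
    refine tendsto_nhds_unique (N.lap_tendsto hf x) (tendsto_const_nhds.congr' ?_)
    have : ∀ᶠ F in (U : Filter (Finset V)), {x} ⊆ F := hU (eventually_ge_atTop _)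
    filter_upwards [this] with F hF
    exact (h5 F x (hF (by simp)) hx).symm
  have f6 := N.max_principle hrec f K f2 f3.le (fun x hx _ => (f5 x hx).ge)
  have : N.lap f N.o = 0 := by
    have : f = fun _ => 0 := funext fun x => le_antisymm (f6 x) (f1 x)
    rw [this]; simp [lap_eq]
  rw [this] at f4
  norm_num at f4

lemma truncate (hrec : N.Recurrent) {g : V → V → ℝ} (hg : N.IsGreen g) (B : Finset V)
    (hB : N.o ∈ B) (F : Finset V) (ν : V → ℝ) (hFB : ∀ x ∈ F, x ∉ B) (hν : ∀ x, 0 ≤ ν x)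
    (hν0 : ∀ x, x ∉ F → ν x = 0) (hν1 : ∑ y ∈ F, ν y = 1) (T M : ℝ) (hT : M < T) (hT0 : 0 ≤ T)
    (D : Finset V) (hD : ∀ x, x ∉ D → ∑ y ∈ F, g x y * ν y ≤ M)
    (hTB : ∀ x ∈ B, ∑ y ∈ F, g x y * ν y ≤ T ∧ ∀ z ∈ N.nb x, ∑ y ∈ F, g z y * ν y ≤ T) :
    ∃ (W : Finset V) (ρ : V → ℝ), (∀ x, 0 ≤ ρ x) ∧ (∀ x, x ∉ W → ρ x = 0) ∧ (∀ x ∈ B, ρ x = 0) ∧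
      ∑ y ∈ W, ρ y = 1 ∧ ∀ x, ∑ y ∈ W, g x y * ρ y = min (∑ y ∈ F, g x y * ν y) T := by
  set h : V → ℝ := fun x => ∑ y ∈ F, g x y * ν y with hh
  let t : V → ℝ := fun x => min (h x) T
  have hνo : ν N.o = 0 := hν0 _ (fun h => hFB _ h hB)
  have hlap : ∀ x, x ≠ N.o → N.lap h x = - ν x := fun x hx => hg.lap_pot F ν hνo x hx (hν0 x)
  have hlapo : N.lap h N.o = 1 := by rw [hh, hg.lap_pot_root F ν hνo, hν1]
  have hnn : ∀ x, 0 ≤ h x := fun x =>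
    Finset.sum_nonneg fun y _ => mul_nonneg (hg.nonneg _ _) (hν y)
  have hth : ∀ x, t x ≤ h x := fun x => min_le_left _ _
  have htT : ∀ x, t x ≤ T := fun x => min_le_right _ _
  have ht0 : ∀ x, 0 ≤ t x := fun x => le_min (hnn x) hT0
  have hto : t N.o = 0 := by
    have : h N.o = 0 := by simp [hh, hg.root]
    simp only [t, this, min_eq_left hT0]
  have hBt : ∀ x ∈ B, N.lap t x = N.lap h x := fun x hx =>
    N.lap_congr (fun z hz => min_eq_left ((hTB x hx).2 z hz)) (min_eq_left (hTB x hx).1)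
  let ρ : V → ℝ := fun x => if x = N.o then 0 else - N.lap t x
  have hρo : ρ N.o = 0 := if_pos rfl
  have hρn : ∀ x, 0 ≤ ρ x := by
    intro x
    simp only [ρ]
    split_ifs with hx
    · exact le_rfl
    · rw [neg_nonneg]
      rcases le_total (h x) T with h1 | h1
      · refine (N.lap_mono hth (min_eq_left h1)).trans ?_
        rw [hlap x hx]; linarith [hν x]
      · have : N.lap (fun _ => T) x = 0 := by simp [lap_eq]
        exact (N.lap_mono htT (min_eq_right h1)).trans this.le
  let W : Finset V := F ∪ (D ∪ D.biUnion N.nb)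
  have hρW : ∀ x, x ∉ W → ρ x = 0 := by
    intro x hx
    simp only [W, Finset.mem_union, Finset.mem_biUnion, not_or, not_exists, not_and] at hx
    obtain ⟨hxF, hxD, hxn⟩ := hx
    simp only [ρ]
    split_ifs with hxo
    · rfl
    · rw [N.lap_congr (g := h) (fun z hz => min_eq_left ?_) (min_eq_left ((hD x hxD).trans hT.le)),
        hlap x hxo, hν0 x hxF, neg_zero, neg_zero]
      refine (hD z (fun hzD => hxn z hzD ?_)).trans hT.le
      rw [N.mem_nb] at hz ⊢
      exact hz.symm
  have hρB : ∀ x ∈ B, ρ x = 0 := by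
    intro x hx
    simp only [ρ]
    split_ifs with hxo
    · rfl
    · rw [hBt x hx, hlap x hxo, hν0 x (fun h => hFB x h hx), neg_zero, neg_zero]
  obtain ⟨K, hK⟩ := hg.bdd_pot W ρ hρn
  have heq : ∀ x, ∑ y ∈ W, g x y * ρ y = t x := by
    refine N.uniq hrec (fun x => ∑ y ∈ W, g x y * ρ y) t (max K T) (fun x => (hK x).trans (le_max_left _ _))
      (fun x => ?_) ?_ ?_
    · rw [abs_of_nonneg (ht0 x)]; exact (htT x).trans (le_max_right _ _)
    · rw [hto]; simp [hg.root]
    · intro x hx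
      rw [hg.lap_pot W ρ hρo x hx (hρW x)]
      simp [ρ, hx]
  refine ⟨W, ρ, hρn, hρW, hρB, ?_, heq⟩
  rw [← hg.lap_pot_root W ρ hρo, ← hlapo, ← hBt _ hB]
  congr 1
  funext x
  exact heq x

lemma energy (hrec : N.Recurrent) {g : V → V → ℝ} (hg : N.IsGreen g) (B : Finset V)
    (hB : N.o ∈ B) (k : ℕ) (hk : 0 < k) (W : Finset V) (ρ : ℕ → V → ℝ) (M T : ℝ) (hM : 0 < M)
    (hTk : T ≤ k)
    (hρ : ∀ i x, 0 ≤ ρ i x) (hρB : ∀ i, ∀ x ∈ B, ρ i x = 0)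
    (hρ1 : ∀ i < k, ∑ y ∈ W, ρ i y = 1)
    (hE : ∀ i < k, ∀ j < k, ∑ x ∈ W, (∑ y ∈ W, g x y * ρ i y) * ρ j x ≤ M + if i = j then T else 0) :
    ∃ h : V → ℝ, (∀ x, 0 ≤ h x) ∧ (∀ x, h x ≤ 2 * (M + 1)) ∧ h N.o = 0 ∧ 1 / 2 ≤ N.lap h N.o ∧
    (∀ x ∈ B, x ≠ N.o → N.lap h x = 0) := by
  have hk' : (0:ℝ) < k := by exact_mod_cast hk
  let r : V → ℝ := fun y => (∑ i ∈ Finset.range k, ρ i y) / k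
  have hr : ∀ x, 0 ≤ r x := fun x => div_nonneg (Finset.sum_nonneg fun i _ => hρ i x) hk'.le
  have hrB : ∀ x ∈ B, r x = 0 := by
    intro x hx
    simp [r, hρB _ x hx]
  have hr1 : ∑ y ∈ W, r y = 1 := by
    simp only [r]
    rw [← Finset.sum_div, Finset.sum_comm, Finset.sum_congr rfl
      (fun i hi => hρ1 i (Finset.mem_range.1 hi))]
    simp [hk'.ne']
  let H : V → ℝ := fun x => ∑ y ∈ W, g x y * r y
  have hHE : ∑ x ∈ W, H x * r x ≤ M + 1 := by
    have h1 : ∑ x ∈ W, H x * r x = (∑ i ∈ Finset.range k, ∑ j ∈ Finset.range k,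
        ∑ x ∈ W, (∑ y ∈ W, g x y * ρ i y) * ρ j x) / (k * k) := by
      have h2 : ∀ x, H x = (∑ i ∈ Finset.range k, ∑ y ∈ W, g x y * ρ i y) / k := by
        intro x
        simp only [H, r]
        rw [Finset.sum_comm, Finset.sum_div]
        exact Finset.sum_congr rfl fun y _ => by rw [← Finset.mul_sum]; ring
      simp only [h2, r]
      simp_rw [div_mul_div_comm, Finset.sum_mul_sum]
      rw [← Finset.sum_div, Finset.sum_comm]
      congr 1
      exact Finset.sum_congr rfl fun i _ => Finset.sum_comm
    rw [h1, div_le_iff₀ (by positivity)]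
    calc _ ≤ ∑ i ∈ Finset.range k, ∑ j ∈ Finset.range k, (M + if i = j then T else 0) :=
          Finset.sum_le_sum fun i hi => Finset.sum_le_sum fun j hj =>
            hE i (Finset.mem_range.1 hi) j (Finset.mem_range.1 hj)
      _ = k * k * M + k * T := by
          have : ∀ i ∈ Finset.range k, ∑ j ∈ Finset.range k, (M + if i = j then T else 0) = k * M + T := by
            intro i hi
            rw [Finset.sum_add_distrib, Finset.sum_ite_eq, if_pos hi]; simp
          rw [Finset.sum_congr rfl this]; simp; ring
      _ ≤ (M + 1) * (k * k) := by nlinarith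
  let A : Finset V := W.filter (fun x => H x ≤ 2 * (M + 1))
  let r' : V → ℝ := fun x => if x ∈ A then r x else 0
  have hr'0 : ∀ x, 0 ≤ r' x := fun x => by simp only [r']; split_ifs; exacts [hr x, le_rfl]
  have hr'o : r' N.o = 0 := by simp [r', hrB _ hB]
  have hHnn : ∀ x, 0 ≤ H x := fun x =>
    Finset.sum_nonneg fun y _ => mul_nonneg (hg.nonneg _ _) (hr y)
  let h' : V → ℝ := fun x => ∑ y ∈ A, g x y * r' y
  have hh'H : ∀ x, h' x ≤ H x := by
    intro x
    calc h' x = ∑ y ∈ A, g x y * r y := Finset.sum_congr rfl fun y hy => by simp only [r', if_pos hy]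
      _ ≤ H x := Finset.sum_le_sum_of_subset_of_nonneg (Finset.filter_subset _ _)
          fun y _ _ => mul_nonneg (hg.nonneg _ _) (hr y)
  have hlap : ∀ x, x ≠ N.o → N.lap h' x = - r' x := fun x hx =>
    hg.lap_pot A r' hr'o x hx (fun h => by simp only [r', if_neg h])
  obtain ⟨K, hK⟩ := hg.bdd_pot A r' hr'0
  have hle : ∀ x, h' x - 2 * (M + 1) ≤ 0 := by
    refine N.max_principle hrec (fun x => h' x - 2 * (M + 1)) K (fun x => ?_) ?_ ?_
    · have := (abs_le.1 (hK x)).2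
      change h' x - _ ≤ _
      change h' x ≤ _ at this
      linarith
    · have : h' N.o = 0 := by simp [h', hg.root]
      rw [this]; linarith
    · intro x hx hp
      rw [N.lap_sub_const, hlap x hx]
      have : x ∉ A := by
        intro hxA
        have := (Finset.mem_filter.1 hxA).2
        linarith [hh'H x]
      simp only [r', if_neg this]; simp
  refine ⟨h', fun x => Finset.sum_nonneg fun y _ => mul_nonneg (hg.nonneg _ _) (hr'0 y),
    fun x => by linarith [hle x], by simp [h', hg.root], ?_, ?_⟩
  · have h1 : N.lap h' N.o = ∑ y ∈ A, r y := by
      refine (hg.lap_pot_root A r' hr'o).trans ?_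
      exact Finset.sum_congr rfl fun y hy => by simp only [r', if_pos hy]
    rw [h1]
    have h2 : ∑ y ∈ A, r y + ∑ y ∈ W.filter (fun x => ¬ H x ≤ 2 * (M + 1)), r y = 1 := by
      exact (Finset.sum_filter_add_sum_filter_not W (fun x => H x ≤ 2 * (M + 1)) r).trans hr1
    have h3 : 2 * (M + 1) * ∑ y ∈ W.filter (fun x => ¬ H x ≤ 2 * (M + 1)), r y ≤ M + 1 := by
      rw [Finset.mul_sum]
      refine le_trans ?_ hHE
      refine le_trans (Finset.sum_le_sum (g := fun x => H x * r x) fun x hx => ?_)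
        (Finset.sum_le_sum_of_subset_of_nonneg (Finset.filter_subset _ _)
          fun x _ _ => mul_nonneg (hHnn x) (hr x))
      exact mul_le_mul_of_nonneg_right (not_le.1 (Finset.mem_filter.1 hx).2).le (hr x)
    nlinarith
  · intro x hx hxo
    rw [hlap x hxo]
    simp [r', hrB x hx]

/-- A finitely supported probability measure off `B` on which all potentials have mean `≤ M`. -/
def Bad (N : RootedNetwork V) (M : ℝ) (B F : Finset V) (ν : V → ℝ) : Prop :=
  (∀ x ∈ F, x ∉ B) ∧ (∀ x, 0 ≤ ν x) ∧ (∀ x, x ∉ F → ν x = 0) ∧ ∑ y ∈ F, ν y = 1 ∧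
    ∀ h, N.IsPotential h → ∑ y ∈ F, h y * ν y ≤ M

lemma Bad.finite {g : V → V → ℝ} (hg : N.IsGreen g) {M : ℝ} {B F : Finset V} {ν : V → ℝ}
    (hb : N.Bad M B F ν) : ∃ D : Finset V, ∀ x, x ∉ D → ∑ y ∈ F, g x y * ν y ≤ M + 1 := by
  have hfin : {x | ¬ ∑ y ∈ F, g x y * ν y ≤ M + 1}.Finite := by
    by_contra hinf
    obtain ⟨h, hp, U, hU, hlim⟩ := hg.exists_limit _ hinf
    have h1 := hb.2.2.2.2 h hp
    have h2 : Tendsto (fun x => ∑ y ∈ F, g y x * ν y) U (𝓝 (∑ y ∈ F, h y * ν y)) :=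
      tendsto_finsetSum _ fun y _ => (hlim y).mul_const _
    have h3 : M + 1 ≤ ∑ y ∈ F, h y * ν y := by
      refine ge_of_tendsto h2 ?_
      filter_upwards [hU] with x hx
      refine (not_le.1 hx).le.trans (le_of_eq ?_)
      exact Finset.sum_congr rfl fun y _ => by rw [hg.symm]
    linarith
  refine ⟨hfin.toFinset, fun x hx => ?_⟩
  by_contra h
  exact hx (by simpa using h)

lemma pair_symm {g : V → V → ℝ} (hg : N.IsGreen g) (F W : Finset V) (ν ρ : V → ℝ) :
    ∑ x ∈ W, (∑ y ∈ F, g x y * ν y) * ρ x = ∑ x ∈ F, (∑ y ∈ W, g x y * ρ y) * ν x := by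
  simp_rw [Finset.sum_mul]
  rw [Finset.sum_comm]
  exact Finset.sum_congr rfl fun x _ => Finset.sum_congr rfl fun y _ => by rw [hg.symm]; ring

lemma exists_not_bad (hrec : N.Recurrent) {g : V → V → ℝ} (hg : N.IsGreen g) (M : ℝ) (hM : 0 < M) :
    ∃ B : Finset V, ∀ F ν, ¬ N.Bad M B F ν := by
  by_contra hcon
  push Not at hcon
  obtain ⟨B, hB, hBn⟩ := no_bdd hrec (N := N) (2 * ((M + 1) + 1))
  choose Fc νc hbad using hcon
  choose Dc hDc using fun B' => (hbad B').finite hg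
  choose C hC using N.exists_bound
  -- the sequence
  let Bs : ℕ → Finset V := fun n => Nat.rec B (fun _ P => P ∪ Dc P) n
  have hBs : ∀ n, Bs (n+1) = Bs n ∪ Dc (Bs n) := fun n => rfl
  have hmono : Monotone Bs := monotone_nat_of_le_succ fun n => by
    rw [hBs]; exact Finset.subset_union_left
  have hBB : ∀ n, B ⊆ Bs n := fun n => hmono (Nat.zero_le n)
  have hDB : ∀ i j, i < j → Dc (Bs i) ⊆ Bs j := fun i j hij =>
    (Finset.subset_union_right (s₁ := Bs i)).trans (hmono (Nat.succ_le_of_lt hij))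
  let F : ℕ → Finset V := fun n => Fc (Bs n)
  let ν : ℕ → V → ℝ := fun n => νc (Bs n)
  have hb : ∀ n, N.Bad M (Bs n) (F n) (ν n) := fun n => hbad _
  let h : ℕ → V → ℝ := fun n x => ∑ y ∈ F n, g x y * ν n y
  have hhD : ∀ i x, x ∉ Dc (Bs i) → h i x ≤ M + 1 := fun i => hDc (Bs i)
  have hFB : ∀ n, ∀ x ∈ F n, x ∉ B := fun n x hx hxB => (hb n).1 x hx (hBB n hxB)
  have hνo : ∀ n, ν n N.o = 0 := fun n => (hb n).2.2.1 _ fun h => hFB n _ h hB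
  have hsub : ∀ n, N.SubPot (h n) := fun n =>
    hg.subPot (F n) (ν n) (hb n).2.1 (hνo n) (hb n).2.2.1 (hb n).2.2.2.1
  obtain ⟨T, hT1, hT2⟩ : ∃ T : ℝ, M + 1 < T ∧ ∀ x ∈ B ∪ B.biUnion N.nb, C x ≤ T := by
    refine ⟨M + 2 + ∑ x ∈ B ∪ B.biUnion N.nb, |C x|, ?_, ?_⟩
    · have : 0 ≤ ∑ x ∈ B ∪ B.biUnion N.nb, |C x| := Finset.sum_nonneg fun x _ => abs_nonneg _
      linarith
    · intro x hx
      have := Finset.single_le_sum (f := fun x => |C x|) (fun x _ => abs_nonneg _) hx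
      have h2 := le_abs_self (C x)
      linarith
  have hTB : ∀ n, ∀ x ∈ B, h n x ≤ T ∧ ∀ z ∈ N.nb x, h n z ≤ T := by
    intro n x hx
    refine ⟨(hC x _ (hsub n)).trans (hT2 x (Finset.mem_union_left _ hx)), fun z hz => ?_⟩
    exact (hC z _ (hsub n)).trans
      (hT2 z (Finset.mem_union_right _ (Finset.mem_biUnion.2 ⟨x, hx, hz⟩)))
  have htr := fun n => truncate hrec hg B hB (F n) (ν n) (hFB n) (hb n).2.1 (hb n).2.2.1
    (hb n).2.2.2.1 T (M + 1) hT1 (by linarith) (Dc (Bs n)) (hhD n) (hTB n)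
  choose W ρ hρ0 hρW hρB hρ1 hρg using htr
  obtain ⟨k, hk⟩ := exists_nat_ge T
  have hk0 : 0 < k := by
    have : (0:ℝ) < k := by linarith
    exact_mod_cast this
  let WW := (Finset.range k).biUnion W
  have hWW : ∀ i < k, W i ⊆ WW := fun i hi =>
    Finset.subset_biUnion_of_mem W (Finset.mem_range.2 hi)
  have hsum : ∀ i < k, ∀ f : V → ℝ, ∑ x ∈ WW, f x * ρ i x = ∑ x ∈ W i, f x * ρ i x := by
    intro i hi f
    symm
    apply Finset.sum_subset (hWW i hi)
    intro x _ hx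
    rw [hρW i x hx, mul_zero]
  have hcross : ∀ i j, i < j → ∑ x ∈ F j, h i x * ν j x ≤ M + 1 := by
    intro i j hij
    calc ∑ x ∈ F j, h i x * ν j x ≤ ∑ x ∈ F j, (M + 1) * ν j x := by
          apply Finset.sum_le_sum
          intro x hx
          refine mul_le_mul_of_nonneg_right (hhD i x fun hxD => ?_) ((hb j).2.1 x)
          exact (hb j).1 x hx (hDB i j hij hxD)
      _ = M + 1 := by rw [← Finset.mul_sum, (hb j).2.2.2.1, mul_one]
  have hcross' : ∀ i j, i ≠ j → ∑ x ∈ F j, h i x * ν j x ≤ M + 1 := by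
    intro i j hij
    rcases lt_or_gt_of_ne hij with h1 | h1
    · exact hcross i j h1
    · refine le_of_eq_of_le ?_ (hcross j i h1)
      exact pair_symm hg _ _ _ _
  obtain ⟨f, f1, f2, f3, f4, f5⟩ := energy hrec hg B hB k hk0 WW ρ (M + 1) T (by linarith) hk hρ0 hρB
    (fun i hi => by
      have := hsum i hi (fun _ => 1)
      simp only [one_mul] at this
      rw [this, hρ1])
    (fun i hi j hj => by
      simp_rw [hsum i hi]
      rw [hsum j hj]
      simp_rw [hρg i]
      by_cases hij : i = j
      · rw [if_pos hij]
        calc _ ≤ ∑ x ∈ W j, T * ρ j x := Finset.sum_le_sum fun x _ =>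
                mul_le_mul_of_nonneg_right (min_le_right _ _) (hρ0 j x)
          _ = T := by rw [← Finset.mul_sum, hρ1, mul_one]
          _ ≤ _ := by linarith
      · rw [if_neg hij, add_zero]
        calc _ ≤ ∑ x ∈ W j, h i x * ρ j x := Finset.sum_le_sum fun x _ =>
                mul_le_mul_of_nonneg_right (min_le_left _ _) (hρ0 j x)
          _ = ∑ x ∈ F i, (∑ y ∈ W j, g x y * ρ j y) * ν i x := pair_symm hg _ _ _ _
          _ ≤ ∑ x ∈ F i, h j x * ν i x := by
                apply Finset.sum_le_sum
                intro x _
                rw [hρg j]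
                exact mul_le_mul_of_nonneg_right (min_le_left _ _) ((hb i).2.1 x)
          _ ≤ M + 1 := hcross' j i (Ne.symm hij))
  exact hBn f f1 f2 f3 f4 f5

end main
end RootedNetwork
namespace RootedNetwork
section final
variable {V : Type*} {N : RootedNetwork V}

lemma lap_comb (f g : V → ℝ) (a b : ℝ) (x : V) :
    N.lap (fun z => a * f z + b * g z) x = a * N.lap f x + b * N.lap g x := by
  simp only [lap_eq]
  rw [Finset.mul_sum, Finset.mul_sum, ← Finset.sum_add_distrib]
  exact Finset.sum_congr rfl fun z _ => by ring

lemma minimax_finite (M : ℝ) (B F : Finset V) (hFB : ∀ x ∈ F, x ∉ B)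
    (hne : ∃ h, N.IsPotential h) (hnb : ∀ F ν, ¬ N.Bad M B F ν) :
    ∃ h, N.IsPotential h ∧ ∀ x ∈ F, M ≤ h x := by
  by_contra hcon
  push Not at hcon
  let Q : Set (F → ℝ) := {v | ∀ x, M < v x}
  let S : Set (F → ℝ) := {v | ∃ h, N.IsPotential h ∧ ∀ x : F, v x = h x}
  have hQc : Convex ℝ Q := by
    intro v hv w hw a b ha hb hab x
    have h1 := hv x
    have h2 := hw x
    simp only [Pi.add_apply, Pi.smul_apply, smul_eq_mul]
    have : M = a * M + b * M := by rw [← add_mul, hab, one_mul]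
    rcases ha.eq_or_lt with h | h
    · subst h
      have : b = 1 := by linarith
      subst this; linarith
    · have := mul_lt_mul_of_pos_left h1 h
      have := mul_le_mul_of_nonneg_left h2.le hb
      linarith
  have hQo : IsOpen Q := by
    have : Q = ⋂ x : F, {v | M < v x} := by ext v; simp [Q]
    rw [this]
    exact isOpen_iInter_of_finite fun x => isOpen_lt continuous_const (continuous_apply x)
  have hSc : Convex ℝ S := by
    rintro v ⟨h, hh, hv⟩ w ⟨k, hk, hw⟩ a b ha hb hab
    refine ⟨fun z => a * h z + b * k z, ⟨?_, ?_, ?_, ?_⟩, ?_⟩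
    · exact fun z => add_nonneg (mul_nonneg ha (hh.1 z)) (mul_nonneg hb (hk.1 z))
    · simp [hh.2.1, hk.2.1]
    · rw [lap_comb, hh.2.2.1, hk.2.2.1]; linarith
    · intro z hz
      rw [lap_comb, hh.2.2.2 z hz, hk.2.2.2 z hz]; simp
    · intro x; simp [hv x, hw x]
  have hdisj : Disjoint Q S := by
    rw [Set.disjoint_left]
    rintro v hv ⟨h, hh, hvh⟩
    obtain ⟨x, hx, hlt⟩ := hcon h hh
    have := hv ⟨x, hx⟩
    rw [hvh] at this
    exact lt_asymm this hlt
  obtain ⟨φ, u, h1, h2⟩ := geometric_hahn_banach_open hQc hQo hSc hdisj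
  obtain ⟨a, ha⟩ : ∃ a : F → ℝ, ∀ v, φ v = - ∑ x, v x * a x := by
    refine ⟨fun x => - φ (Pi.single x 1), fun v => ?_⟩
    have := LinearMap.pi_apply_eq_sum_univ (φ : (F → ℝ) →ₗ[ℝ] ℝ) v
    simp only [ContinuousLinearMap.coe_coe, smul_eq_mul] at this
    rw [this]
    simp only [mul_neg, Finset.sum_neg_distrib, neg_neg]
    refine Finset.sum_congr rfl fun x _ => ?_
    congr 2
    funext y
    simp [Pi.single_apply, eq_comm]
  have hconst : ∀ m, M < m → - (m * ∑ x, a x) < u := by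
    intro m hm
    have := h1 (fun _ => m) (fun _ => hm)
    rwa [ha, ← Finset.mul_sum] at this
  have ha0 : ∀ x, 0 ≤ a x := by
    intro x
    by_contra hneg
    push Not at hneg
    have key : ∀ s : ℝ, 0 ≤ s → - ((M + 1) * ∑ x, a x) - s * a x < u := by
      intro s hs
      have := h1 (fun y => (M + 1) + if y = x then s else 0) (fun y => by dsimp only; split_ifs <;> linarith)
      rw [ha] at this
      simp only [add_mul, Finset.sum_add_distrib, ite_mul, zero_mul, Finset.sum_ite_eq',
        Finset.mem_univ, if_true, ← Finset.mul_sum] at this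
      linarith
    have hc := hconst (M + 1) (by linarith)
    have := key ((u + (M + 1) * ∑ x, a x) / (- a x)) (div_nonneg (by linarith) (by linarith))
    have h3 : (u + (M + 1) * ∑ x, a x) / (- a x) * a x = - (u + (M + 1) * ∑ x, a x) := by
      rw [div_neg, neg_mul, div_mul_cancel₀ _ hneg.ne]
    rw [h3] at this
    linarith
  obtain ⟨h₀, hh₀⟩ := hne
  have hpos : 0 < ∑ x, a x := by
    refine lt_of_le_of_ne (Finset.sum_nonneg fun x _ => ha0 x) fun h0 => ?_
    have hz : ∀ x, a x = 0 := fun x =>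
      (Finset.sum_eq_zero_iff_of_nonneg (fun x _ => ha0 x)).1 h0.symm x (Finset.mem_univ x)
    have h3 := h2 (fun x => h₀ x) ⟨h₀, hh₀, fun x => rfl⟩
    have h4 := hconst (M + 1) (by linarith)
    rw [ha] at h3
    simp [hz] at h3 h4
    linarith
  have hu : - u ≤ M * ∑ x, a x := by
    by_contra hlt
    push Not at hlt
    have := hconst (-u / ∑ x, a x) (by rw [lt_div_iff₀ hpos]; exact hlt)
    rw [div_mul_cancel₀ _ hpos.ne'] at this
    linarith
  refine hnb F (extF F (fun x => a x / ∑ x, a x)) ⟨hFB, ?_, ?_, ?_, ?_⟩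
  · intro x
    unfold extF
    split_ifs
    · exact div_nonneg (ha0 _) hpos.le
    · exact le_rfl
  · intro x hx
    simp [extF, hx]
  · rw [← Finset.sum_coe_sort]
    simp only [extF, Finset.coe_mem, dif_pos, Subtype.coe_eta]
    rw [← Finset.sum_div, div_self hpos.ne']
  · intro h hh
    rw [← Finset.sum_coe_sort]
    simp only [extF, Finset.coe_mem, dif_pos, Subtype.coe_eta]
    have h3 := h2 (fun x => h x) ⟨h, hh, fun x => rfl⟩
    rw [ha] at h3
    have : ∑ x : F, h x * (a x / ∑ x, a x) = (∑ x : F, h x * a x) / ∑ x, a x := by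
      rw [Finset.sum_div]; exact Finset.sum_congr rfl fun x _ => by ring
    rw [this, div_le_iff₀ hpos]
    linarith

lemma IsPotential.subPot {h : V → ℝ} (hh : N.IsPotential h) : N.SubPot h :=
  ⟨hh.1, hh.2.1, hh.2.2.1.le, fun v hv => (hh.2.2.2 v hv).le⟩

lemma minimax (M : ℝ) (B : Finset V)
    (hne : ∃ h, N.IsPotential h) (hnb : ∀ F ν, ¬ N.Bad M B F ν) :
    ∃ h, N.IsPotential h ∧ ∀ x, x ∉ B → M ≤ h x := by
  have hex : ∀ F : Finset V, ∃ h, N.IsPotential h ∧ ∀ x ∈ F \ B, M ≤ h x := fun F =>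
    minimax_finite M B (F \ B) (fun x hx => (Finset.mem_sdiff.1 hx).2) hne hnb
  choose h hp hM using hex
  choose C hC using N.exists_bound
  let U : Ultrafilter (Finset V) := Ultrafilter.of atTop
  have hU : (U : Filter (Finset V)) ≤ atTop := Ultrafilter.of_le _
  have hlim : ∀ x, ∃ L, Tendsto (fun F => h F x) U (𝓝 L) := fun x =>
    ultra_lim U _ 0 (C x) (Eventually.of_forall fun F => ⟨(hp F).1 x, hC x _ (hp F).subPot⟩)
  choose f hf using hlim
  refine ⟨f, ⟨fun x => ge_of_tendsto' (hf x) fun F => (hp F).1 x, ?_, ?_, ?_⟩, ?_⟩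
  · exact tendsto_nhds_unique (hf N.o) (tendsto_const_nhds.congr fun F => (hp F).2.1.symm)
  · exact tendsto_nhds_unique (N.lap_tendsto hf N.o)
      (tendsto_const_nhds.congr fun F => (hp F).2.2.1.symm)
  · intro v hv
    exact tendsto_nhds_unique (N.lap_tendsto hf v)
      (tendsto_const_nhds.congr fun F => ((hp F).2.2.2 v hv).symm)
  · intro x hx
    refine ge_of_tendsto (hf x) ?_
    have : ∀ᶠ F in (U : Filter (Finset V)), {x} ⊆ F := hU (eventually_ge_atTop _)
    filter_upwards [this] with F hF
    exact hM F x (Finset.mem_sdiff.2 ⟨hF (by simp), hx⟩)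

lemma lap_hasSum {w : ℕ → ℝ} {h : ℕ → V → ℝ} {f : V → ℝ}
    (hf : ∀ x, HasSum (fun n => w n * h n x) (f x)) (x : V) :
    HasSum (fun n => w n * N.lap (h n) x) (N.lap f x) := by
  simp only [lap_eq, Finset.mul_sum]
  apply hasSum_sum
  intro z _
  have := ((hf z).sub (hf x)).mul_left (N.c x z)
  have he : (fun n => w n * (N.c x z * (h n z - h n x)))
      = fun n => N.c x z * (w n * h n z - w n * h n x) := by
    funext n; ring
  rw [he]; exact this

end final
end RootedNetwork

/-- **Every recurrent network has a potential tending to infinity.**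
On any infinite recurrent rooted network there exists a potential which tends
to infinity, i.e. all its sublevel sets are finite. -/
theorem exists_potential_tendsto_infinity {V : Type*} [Infinite V]
    (N : RootedNetwork V) (hrec : N.Recurrent) :
    ∃ h : V → ℝ, N.IsPotential h ∧ ∀ M : ℝ, 0 < M → {v : V | h v ≤ M}.Finite := by
  obtain ⟨g, hg⟩ := N.exists_green hrec
  obtain ⟨h₀, hh₀, _⟩ := hg.exists_limit Set.univ Set.infinite_univ
  have hex : ∀ n : ℕ, ∃ (B : Finset V) (h : V → ℝ), N.IsPotential h ∧ ∀ x, x ∉ B → (4:ℝ) ^ n ≤ h x := by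
    intro n
    obtain ⟨B, hB⟩ := RootedNetwork.exists_not_bad hrec hg ((4:ℝ) ^ n) (by positivity)
    exact ⟨B, RootedNetwork.minimax _ B ⟨h₀, hh₀⟩ hB⟩
  choose B h hp hB using hex
  choose C hC using N.exists_bound
  let w : ℕ → ℝ := fun n => 1 / 2 / 2 ^ n
  have hw : HasSum w 1 := hasSum_geometric_two' 1
  have hw0 : ∀ n, 0 < w n := fun n => by simp only [w]; positivity
  have hsum : ∀ x, Summable (fun n => w n * h n x) := by
    intro x
    refine Summable.of_nonneg_of_le (fun n => mul_nonneg (hw0 n).le ((hp n).1 x))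
      (fun n => mul_le_mul_of_nonneg_left (hC x _ (hp n).subPot) (hw0 n).le) (hw.summable.mul_right _)
  let f : V → ℝ := fun x => ∑' n, w n * h n x
  have hf : ∀ x, HasSum (fun n => w n * h n x) (f x) := fun x => (hsum x).hasSum
  have hlap := RootedNetwork.lap_hasSum (N := N) hf
  refine ⟨f, ⟨?_, ?_, ?_, ?_⟩, ?_⟩
  · exact fun x => tsum_nonneg fun n => mul_nonneg (hw0 n).le ((hp n).1 x)
  · simp only [f, (hp _).2.1]; simp
  · have := hlap N.o
    simp only [(hp _).2.2.1, mul_one] at this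
    exact this.unique hw
  · intro v hv
    have := hlap v
    simp only [(hp _).2.2.2 v hv, mul_zero] at this
    exact this.unique hasSum_zero
  · intro M hM
    obtain ⟨n, hn⟩ := pow_unbounded_of_one_lt (2 * M) (one_lt_two)
    refine (B n).finite_toSet.subset ?_
    intro v hv
    by_contra hvB
    have h1 := hB n v hvB
    have h2 : w n * h n v ≤ f v :=
      (hf v).summable.le_tsum n (fun j _ => mul_nonneg (hw0 j).le ((hp j).1 v))
    have h3 : w n * 4 ^ n ≤ w n * h n v := mul_le_mul_of_nonneg_left h1 (hw0 n).le
    have h4 : w n * 4 ^ n = 2 ^ n / 2 := by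
      simp only [w]
      have : (4:ℝ) ^ n = 2 ^ n * 2 ^ n := by rw [← mul_pow]; norm_num
      rw [this]; field_simp
    have h5 : f v ≤ M := hv
    linarith
end
end

section
/- Let (G,c,o) be a recurrent rooted network and h a potential on it. Then the h-process {Y_n} on S_h={v : h(v)>0} is transient, and its Green kernel G^h(x,y)=Σ_{k≥0} P^h_x(Y_k=y) satisfies G^h(x,y) = G_o(x,y) · h(y)/h(x) for all x,y ∈ S_h, where G_o is the Green kernel of the network random walk killed at o. -/
open scoped ENNReal
open Filter Topology Classical
noncomputable section

namespace RootedNetwork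

variable {V : Type*}

/-- The transition probability `p^h(x,y) = p(x,y) h(y) / h(x)` of the Doob
`h`-process. -/
noncomputable def hp (N : RootedNetwork V) (h : V → ℝ) (x y : V) : ℝ≥0∞ :=
  N.p x y * ENNReal.ofReal (h y / h x)

/-- The probability that the `h`-process started at `x` begins with the given
finite sequence of steps. -/
noncomputable def hPathProb (N : RootedNetwork V) (h : V → ℝ) : V → List V → ℝ≥0∞
  | _, [] => 1
  | x, y :: l => N.hp h x y * hPathProb N h y l

end RootedNetwork
namespace RootedNetwork

/-- The Green kernel `G^h(x,y) = Σ_{k ≥ 0} P^h_x(Y_k = y)` of the `h`-process,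
as a sum over finite paths from `x` to `y` (the `k = 0` term is the first
summand). -/
noncomputable def hGreen {V : Type*} (N : RootedNetwork V) (h : V → ℝ) (x y : V) : ℝ≥0∞ :=
  (if x = y then 1 else 0) +
    ∑' l : {l : List V // l.getLast? = some y}, N.hPathProb h x l.1

end RootedNetwork
namespace RootedNetwork

theorem aux_c_nonneg {V : Type*} (N : RootedNetwork V) (x y : V) : 0 ≤ N.c x y := by
  by_cases hxy : N.G.Adj x y
  · exact (N.c_pos x y hxy).le
  · exact (N.c_eq_zero x y hxy).ge

theorem aux_zero_step {V : Type*} (N : RootedNetwork V) (h : V → ℝ) (hpot : N.IsPotential h)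
    (v w : V) (hv : v ≠ N.o) (h0 : h v = 0) (hw : h w ≠ 0) : N.p v w = 0 := by
  have hl := hpot.2.2.2 v hv
  unfold lap at hl
  have hs : Summable (fun x => N.c v x * (h x - h v)) := by
    apply summable_of_hasFiniteSupport
    refine (N.locallyFinite v).subset ?_
    intro x hx
    by_contra hadj
    apply hx
    have : N.c v x = 0 := N.c_eq_zero v x hadj
    simp [this]
  have hnn : ∀ x, 0 ≤ N.c v x * (h x - h v) := fun x => by
    rw [h0, sub_zero]
    exact mul_nonneg (N.aux_c_nonneg v x) (hpot.1 x)
  have hz : HasSum (fun x => N.c v x * (h x - h v)) 0 := hl ▸ hs.hasSum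
  have hf := (hasSum_zero_iff_of_nonneg hnn).1 hz
  have hfw := congrFun hf w
  simp only [h0, sub_zero, Pi.zero_apply, mul_eq_zero, hw, or_false] at hfw
  simp [p, hfw]

theorem aux_zero_path {V : Type*} (N : RootedNetwork V) (h : V → ℝ) (hpot : N.IsPotential h)
    (y : V) (hy : 0 < h y) : ∀ (l : List V) (v : V), h v = 0 → N.o ∉ v :: l →
      l.getLast? = some y → N.pathProb v l = 0
  | [], v, _, _, hl => by simp at hl
  | z :: l, v, hv, ho, hl => by
    simp only [List.mem_cons, not_or] at ho
    by_cases hz : h z = 0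
    · have hl2 : l.getLast? = some y := by
        cases l with
        | nil =>
          simp at hl
          subst hl
          exact absurd hz hy.ne'
        | cons a t => simpa [List.getLast?_cons_cons] using hl
      have := aux_zero_path N h hpot y hy l z hz (by simp [ho.2.1, ho.2.2]) hl2
      simp [pathProb, this]
    · simp [pathProb, N.aux_zero_step h hpot v z (Ne.symm ho.1) hv hz]

theorem aux_hpath_o {V : Type*} (N : RootedNetwork V) (h : V → ℝ) (hpot : N.IsPotential h) :
    ∀ (l : List V) (v : V), N.o ∈ l → N.hPathProb h v l = 0
  | [], v, ho => by simp at ho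
  | z :: l, v, ho => by
    rcases List.mem_cons.1 ho with hz | hz
    · simp [hPathProb, hp, ← hz, hpot.2.1]
    · simp [hPathProb, aux_hpath_o N h hpot l z hz]

theorem aux_hpath {V : Type*} (N : RootedNetwork V) (h : V → ℝ) (hpot : N.IsPotential h)
    (y : V) (hy : 0 < h y) : ∀ (l : List V) (v : V), 0 < h v → N.o ∉ v :: l →
      l.getLast? = some y → N.hPathProb h v l = N.pathProb v l * ENNReal.ofReal (h y / h v)
  | [], v, _, _, hl => by simp at hl
  | z :: l, v, hv, ho, hl => by
    simp only [List.mem_cons, not_or] at ho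
    cases l with
    | nil =>
      simp at hl
      subst hl
      simp [hPathProb, pathProb, hp]
    | cons a t =>
      have hl2 : (a :: t).getLast? = some y := by simpa [List.getLast?_cons_cons] using hl
      have ho2 : N.o ∉ z :: a :: t := by
        simp only [List.mem_cons, not_or] at ho ⊢
        exact ho.2
      rcases (hpot.1 z).eq_or_lt with hz | hz
      · rw [hPathProb, pathProb, aux_zero_path N h hpot y hy _ z hz.symm ho2 hl2]
        simp [hp, ← hz]
      · rw [hPathProb, pathProb, aux_hpath N h hpot y hy _ z hz ho2 hl2, hp]
        have : ENNReal.ofReal (h y / h v)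
            = ENNReal.ofReal (h z / h v) * ENNReal.ofReal (h y / h z) := by
          rw [← ENNReal.ofReal_mul (by positivity)]
          congr 1
          field_simp
        rw [this]
        ring

theorem aux_append {V : Type*} (N : RootedNetwork V) (y : V) (m : List V) :
    ∀ (l : List V) (v : V), l.getLast? = some y →
      N.pathProb v (l ++ m) = N.pathProb v l * N.pathProb y m
  | [], v, hl => by simp at hl
  | z :: l, v, hl => by
    cases l with
    | nil =>
      simp at hl
      subst hl
      simp [pathProb]
    | cons a t =>
      have hl2 : (a :: t).getLast? = some y := by simpa [List.getLast?_cons_cons] using hl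
      rw [List.cons_append, pathProb, aux_append N y m _ z hl2, ← mul_assoc]
      rfl

theorem aux_green_finite {V : Type*} (N : RootedNetwork V) (hrec : N.Recurrent) (x y : V)
    (hx : x ≠ N.o) (hy : y ≠ N.o) : N.GreenKer x y ≠ ⊤ := by
  have h1 := hrec y
  rw [hitProb, if_neg hy] at h1
  have hm : ∃ m : {l : List V // l.getLast? = some N.o ∧ N.o ∉ l.dropLast},
      N.pathProb y m.1 ≠ 0 := by
    by_contra! hcon
    rw [ENNReal.tsum_eq_zero.2 hcon] at h1
    exact zero_ne_one h1
  obtain ⟨⟨m, hm1, hm2⟩, hm3⟩ := hm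
  have hmne : m ≠ [] := by
    rintro rfl
    simp at hm1
  have h2 := hrec x
  rw [hitProb, if_neg hx] at h2
  let φ : {l : List V // l.getLast? = some y ∧ N.o ∉ x :: l} →
      {l : List V // l.getLast? = some N.o ∧ N.o ∉ l.dropLast} := fun l =>
    ⟨l.1 ++ m, by simp [List.getLast?_append, hm1], by
      rw [List.dropLast_append_of_ne_nil hmne, List.mem_append]
      rintro (h3 | h3)
      · exact l.2.2 (List.mem_cons_of_mem _ h3)
      · exact hm2 h3⟩
  have hφ : Function.Injective φ := by
    intro a b hab
    have := congrArg Subtype.val hab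
    exact Subtype.ext (List.append_cancel_right this)
  have h3 := ENNReal.tsum_comp_le_tsum_of_injective hφ (fun l => N.pathProb x l.1)
  rw [h2] at h3
  have h4 : ∀ l, N.pathProb x (φ l).1 = N.pathProb x l.1 * N.pathProb y m := fun l =>
    N.aux_append y m l.1 x l.2.1
  simp only [h4] at h3
  rw [ENNReal.tsum_mul_right] at h3
  unfold GreenKer
  refine ENNReal.add_ne_top.2 ⟨by split_ifs <;> simp, ?_⟩
  intro htop
  rw [htop, ENNReal.top_mul hm3] at h3
  simp at h3

theorem aux_green_eq {V : Type*} (N : RootedNetwork V) (h : V → ℝ) (hpot : N.IsPotential h)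
    (x y : V) (hx : 0 < h x) (hy : 0 < h y) :
    N.hGreen h x y = N.GreenKer x y * ENNReal.ofReal (h y / h x) := by
  have hxo : x ≠ N.o := by
    rintro rfl
    exact hx.ne' hpot.2.1
  unfold hGreen GreenKer
  rw [add_mul, ← ENNReal.tsum_mul_right]
  congr 1
  · by_cases hxy : x = y
    · subst hxy
      simp [hxo, div_self hx.ne']
    · simp [hxy]
  · have e1 := tsum_subtype {l : List V | l.getLast? = some y} (fun l => N.hPathProb h x l)
    have e2 := tsum_subtype {l : List V | l.getLast? = some y ∧ N.o ∉ x :: l}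
      (fun l => N.pathProb x l * ENNReal.ofReal (h y / h x))
    refine e1.trans (Eq.trans ?_ e2.symm)
    refine tsum_congr fun l => ?_
    by_cases hl : l.getLast? = some y
    · by_cases ho : N.o ∈ l
      · simp [Set.indicator, hl, ho, N.aux_hpath_o h hpot l x ho]
      · have ho2 : N.o ∉ x :: l := by simp [ho, Ne.symm hxo]
        rw [Set.indicator_of_mem (show l ∈ {l : List V | l.getLast? = some y} from hl),
          Set.indicator_of_mem (show l ∈ {l : List V | l.getLast? = some y ∧ N.o ∉ x :: l} from
            ⟨hl, ho2⟩)]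
        exact N.aux_hpath h hpot y hy l x hx ho2 hl
    · simp [Set.indicator, hl]

end RootedNetwork

/-- On a recurrent rooted network, the Doob `h`-process of a potential `h` is
transient (its Green kernel is finite at every pair of states of
`S_h = {v : h(v) > 0}`), and its Green kernel satisfies
`G^h(x,y) = G_o(x,y) · h(y)/h(x)`. -/
theorem hProcess_transient_green {V : Type*} (N : RootedNetwork V)
    (hrec : N.Recurrent) (h : V → ℝ) (hpot : N.IsPotential h) :
    (∀ x y : V, 0 < h x → 0 < h y → N.hGreen h x y ≠ ⊤) ∧
    (∀ x y : V, 0 < h x → 0 < h y →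
      N.hGreen h x y = N.GreenKer x y * ENNReal.ofReal (h y / h x)) := by
  have hne : ∀ x, 0 < h x → x ≠ N.o := by
    rintro x hx rfl
    exact hx.ne' hpot.2.1
  refine ⟨fun x y hx hy => ?_, fun x y hx hy => N.aux_green_eq h hpot x y hx hy⟩
  rw [N.aux_green_eq h hpot x y hx hy]
  exact ENNReal.mul_ne_top (N.aux_green_finite hrec x y (hne x hx) (hne y hy))
    ENNReal.ofReal_ne_top
end
end
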